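/- arXiv:1012.5591 — 4 statements merged into one kernel-verified Lean document; each statement's English description precedes it below -/
import Mathlib

section
/- Let a(r) = (1−r²)^{−2}. Suppose G : (0, 1) → ℝ is twice continuously differentiable and satisfies −G''(r) − G'(r)/r = a(r) G(r) for all r ∈ (0, 1), and suppose that G(r) + ln(r)/(2π) and r·G'(r) + 1/(2π) remain bounded as r → 0⁺. Then for every ρ ∈ (0, 1), ∫_{B_ρ} [ a(|x|) + 2|x|²/(1−|x|²)³ ] G(|x|)² dx − π ρ² G'(ρ)² − π a(ρ) ρ² G(ρ)² = −1/(4π), where B_ρ is the open disc of radius ρ centered at the origin in ℝ². -/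
/-!
Put `F(r) = π (r G'(r))² + π a(r) (r G(r))²` with `a(r) = (1 - r²)⁻²`.  The equation reads
`(r G')' = - r a G`, so the cross terms in `F'` cancel and
`F'(r) = 2 π r (a(r) + 2 r² / (1 - r²)³) G(r)²` (`hasDerivAt_pohozaevFun`).  In polar coordinates the
integral over `B_ρ` is therefore `∫₀^ρ F' = F(ρ) - F(0⁺)`, and it remains to see that
`F(0⁺) = π (1 / (2π))² = 1 / (4π)`.

Since `G + log r / (2π)` is bounded, `r G → 0`, so the second term of `F` vanishes in the limit.  For
the first one, mere boundedness of `v(r) = r G' + 1 / (2π)` must be improved to `v → 0`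
(`tendsto_flux`).  On the one hand `v' = - r a G` is bounded near `0`, so `v` is Lipschitz there.  On
the other hand `v / r` is the derivative of the bounded function `H = G + log r / (2π)`, so Cauchy's
mean value theorem for `H` and `log` on `[r², r]` gives `ξ ∈ (r², r)` with
`|v(ξ)| ≤ 2 M / |log r|`.  Hence `|v(r)| ≤ 2 M / |log r| + C r → 0`.
-/

open MeasureTheory Real Filter

noncomputable section

/-- `ℝ²` as a Euclidean space. -/
abbrev E2 : Type := EuclideanSpace ℝ (Fin 2)

/-- The boundary term `π (r G')² + π a(r) (r G)²`, whose derivative is the radial Pohozaev integrand. -/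
def pohozaevFun (G : ℝ → ℝ) (r : ℝ) : ℝ :=
  π * (r * deriv G r) ^ 2 + π * (1 / (1 - r ^ 2) ^ 2) * (r * G r) ^ 2

lemma hasDerivAt_of_contDiffOn_two {G : ℝ → ℝ} (hG : ContDiffOn ℝ 2 G (Set.Ioo 0 1))
    {r : ℝ} (hr : r ∈ Set.Ioo (0 : ℝ) 1) :
    HasDerivAt G (deriv G r) r ∧ HasDerivAt (deriv G) (deriv (deriv G) r) r := by
  have h1 : ContDiffOn ℝ 1 (deriv G) (Set.Ioo 0 1) :=
    hG.deriv_of_isOpen isOpen_Ioo (by norm_num)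
  exact ⟨((hG.differentiableOn (by norm_num)).differentiableAt
      (isOpen_Ioo.mem_nhds hr)).hasDerivAt,
    ((h1.differentiableOn (by norm_num)).differentiableAt (isOpen_Ioo.mem_nhds hr)).hasDerivAt⟩

/-- The divergence form `(r G')' = - r a G` of the equation. -/
lemma hasDerivAt_flux {G : ℝ → ℝ} (hG : ContDiffOn ℝ 2 G (Set.Ioo 0 1))
    (hODE : ∀ r ∈ Set.Ioo (0 : ℝ) 1,
      -(deriv (deriv G) r) - deriv G r / r = G r / (1 - r ^ 2) ^ 2)
    {r : ℝ} (hr : r ∈ Set.Ioo (0 : ℝ) 1) :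
    HasDerivAt (fun r => r * deriv G r) (-(r * (G r / (1 - r ^ 2) ^ 2))) r := by
  have h := (hasDerivAt_id r).mul (hasDerivAt_of_contDiffOn_two hG hr).2
  refine h.congr_deriv ?_
  have hr0 : r ≠ 0 := hr.1.ne'
  rw [← hODE r hr]
  simp only [id]
  field_simp
  ring

lemma hasDerivAt_pohozaevFun {G : ℝ → ℝ} (hG : ContDiffOn ℝ 2 G (Set.Ioo 0 1))
    (hODE : ∀ r ∈ Set.Ioo (0 : ℝ) 1,
      -(deriv (deriv G) r) - deriv G r / r = G r / (1 - r ^ 2) ^ 2)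
    {r : ℝ} (hr : r ∈ Set.Ioo (0 : ℝ) 1) :
    HasDerivAt (pohozaevFun G)
      (2 * π * (r * ((1 / (1 - r ^ 2) ^ 2 + 2 * r ^ 2 / (1 - r ^ 2) ^ 3) * (G r) ^ 2))) r := by
  have hne : 1 - r ^ 2 ≠ 0 := by nlinarith [hr.1, hr.2]
  have h1 := ((hasDerivAt_flux hG hODE hr).pow 2).const_mul π
  have h2 : HasDerivAt (fun r : ℝ => 1 - r ^ 2) (-(2 * r)) r := by
    simpa using ((hasDerivAt_id r).pow 2).const_sub 1
  have h3 : HasDerivAt (fun r : ℝ => 1 / (1 - r ^ 2) ^ 2) (4 * r / (1 - r ^ 2) ^ 3) r := by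
    have := (h2.pow 2).inv (pow_ne_zero 2 hne)
    simp only [one_div]
    refine this.congr_deriv ?_
    simp
    field_simp
    ring
  have h4 := ((hasDerivAt_id r).mul (hasDerivAt_of_contDiffOn_two hG hr).1).pow 2
  have h5 := h1.add ((h3.const_mul π).mul h4)
  refine h5.congr_deriv ?_
  simp
  field_simp
  ring

/-- `r G → 0`, because `G` has at most a logarithmic singularity. -/
lemma tendsto_mul_self_of_log_bound {G : ℝ → ℝ}
    (hb1 : ∃ M : ℝ, ∀ᶠ r in nhdsWithin 0 (Set.Ioi (0 : ℝ)),
      |G r + Real.log r / (2 * π)| ≤ M) :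
    Tendsto (fun r => r * G r) (nhdsWithin 0 (Set.Ioi 0)) (nhds 0) := by
  obtain ⟨M, hM⟩ := hb1
  have hid : Tendsto (fun r : ℝ => r) (nhdsWithin 0 (Set.Ioi 0)) (nhds 0) :=
    tendsto_nhdsWithin_of_tendsto_nhds tendsto_id
  have h1 : Tendsto (fun r => r * (G r + Real.log r / (2 * π)))
      (nhdsWithin 0 (Set.Ioi 0)) (nhds 0) := by
    refine hid.zero_mul_isBoundedUnder_le ⟨M, ?_⟩
    simpa using hM
  have h2 : Tendsto (fun r : ℝ => r * Real.log r) (nhdsWithin 0 (Set.Ioi 0)) (nhds 0) := by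
    have := Real.continuous_mul_log.tendsto 0
    simp only [zero_mul] at this
    exact tendsto_nhdsWithin_of_tendsto_nhds this
  have h3 := h1.sub (h2.div_const (2 * π))
  simp only [zero_div, sub_zero] at h3
  refine h3.congr fun r => ?_
  ring

/-- Near `0` the flux is Lipschitz, since its derivative `- r a G` is bounded there. -/
lemma exists_flux_lipschitz {G : ℝ → ℝ} (hG : ContDiffOn ℝ 2 G (Set.Ioo 0 1))
    (hODE : ∀ r ∈ Set.Ioo (0 : ℝ) 1,
      -(deriv (deriv G) r) - deriv G r / r = G r / (1 - r ^ 2) ^ 2)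
    (hb1 : ∃ M : ℝ, ∀ᶠ r in nhdsWithin 0 (Set.Ioi (0 : ℝ)),
      |G r + Real.log r / (2 * π)| ≤ M) :
    ∃ δ > 0, δ < 1 ∧ ∀ s ∈ Set.Ioo 0 δ, ∀ r ∈ Set.Ioo 0 δ,
      |r * deriv G r - s * deriv G s| ≤ |r - s| := by
  have hid : Tendsto (fun r : ℝ => r) (nhdsWithin 0 (Set.Ioi 0)) (nhds 0) :=
    tendsto_nhdsWithin_of_tendsto_nhds tendsto_id
  have hlim : Tendsto (fun r => r * G r / (1 - r ^ 2) ^ 2) (nhdsWithin 0 (Set.Ioi 0)) (nhds 0) := by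
    have := (tendsto_mul_self_of_log_bound hb1).div (((hid.pow 2).const_sub 1).pow 2) (by norm_num)
    simp only [ne_eq, OfNat.ofNat_ne_zero, not_false_eq_true, zero_pow, zero_div] at this
    exact this
  have hev : ∀ᶠ r in nhdsWithin 0 (Set.Ioi (0 : ℝ)), |r * G r / (1 - r ^ 2) ^ 2| < 1 := by
    have := hlim.abs
    rw [abs_zero] at this
    exact this.eventually (gt_mem_nhds one_pos)
  obtain ⟨δ₀, hδ₀, hδ⟩ := mem_nhdsGT_iff_exists_Ioo_subset.1 hev
  refine ⟨min δ₀ (1 / 2), lt_min hδ₀ (by norm_num),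
    (min_le_right _ _).trans_lt (by norm_num), fun s hs r hr => ?_⟩
  have key := (convex_Ioo 0 (min δ₀ (1 / 2))).norm_image_sub_le_of_norm_hasDerivWithin_le
    (f := fun r => r * deriv G r) (f' := fun r => -(r * (G r / (1 - r ^ 2) ^ 2))) (C := 1)
    (fun x hx => (hasDerivAt_flux hG hODE
      ⟨hx.1, (hx.2.trans_le (min_le_right _ _)).trans (by norm_num)⟩).hasDerivWithinAt)
    (fun x hx => ?_) hs hr
  · simpa using key
  · have : |x * G x / (1 - x ^ 2) ^ 2| < 1 := hδ ⟨hx.1, hx.2.trans_le (min_le_left _ _)⟩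
    rw [norm_neg, Real.norm_eq_abs, ← mul_div_assoc]
    exact this.le

/-- The flux `r G'` converges to `-1 / (2π)` at `0⁺`. -/
lemma tendsto_flux {G : ℝ → ℝ} (hG : ContDiffOn ℝ 2 G (Set.Ioo 0 1))
    (hODE : ∀ r ∈ Set.Ioo (0 : ℝ) 1,
      -(deriv (deriv G) r) - deriv G r / r = G r / (1 - r ^ 2) ^ 2)
    (hb1 : ∃ M : ℝ, ∀ᶠ r in nhdsWithin 0 (Set.Ioi (0 : ℝ)),
      |G r + Real.log r / (2 * π)| ≤ M) :
    Tendsto (fun r => r * deriv G r) (nhdsWithin 0 (Set.Ioi 0)) (nhds (-(1 / (2 * π)))) := by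
  obtain ⟨δ, hδ0, hδ1, hLip⟩ := exists_flux_lipschitz hG hODE hb1
  obtain ⟨M, hM⟩ := hb1
  obtain ⟨η, hη0, hη⟩ := mem_nhdsGT_iff_exists_Ioo_subset.1 hM
  have hη0 : 0 < η := hη0
  have hid : Tendsto (fun r : ℝ => r) (nhdsWithin 0 (Set.Ioi 0)) (nhds 0) :=
    tendsto_nhdsWithin_of_tendsto_nhds tendsto_id
  have hbound : ∀ᶠ r in nhdsWithin 0 (Set.Ioi (0 : ℝ)),
      dist (r * deriv G r) (-(1 / (2 * π))) ≤ r + 2 * M / (-Real.log r) := by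
    filter_upwards [Ioo_mem_nhdsGT (lt_min hδ0 hη0)] with r hr
    have hr0 : 0 < r := hr.1
    have hrδ : r < δ := hr.2.trans_le (min_le_left _ _)
    have hrη : r < η := hr.2.trans_le (min_le_right _ _)
    have hr1 : r < 1 := hrδ.trans hδ1
    have hsq : r ^ 2 < r := by nlinarith
    have hsq0 : 0 < r ^ 2 := by positivity
    have hlog : Real.log r < 0 := Real.log_neg hr0 hr1
    have hH : ∀ x ∈ Set.Ioo (0 : ℝ) 1, HasDerivAt (fun r => G r + Real.log r / (2 * π))
        (deriv G x + x⁻¹ / (2 * π)) x := fun x hx =>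
      (hasDerivAt_of_contDiffOn_two hG hx).1.add
        ((Real.hasDerivAt_log hx.1.ne').div_const (2 * π))
    obtain ⟨ξ, hξ, hcauchy⟩ := exists_ratio_hasDerivAt_eq_ratio_slope
      (fun r => G r + Real.log r / (2 * π)) (fun x => deriv G x + x⁻¹ / (2 * π)) hsq
      (fun x hx => (hH x ⟨hsq0.trans_le hx.1, hx.2.trans_lt hr1⟩).continuousAt.continuousWithinAt)
      (fun x hx => hH x ⟨hsq0.trans hx.1, hx.2.trans hr1⟩)
      Real.log (fun x => x⁻¹)
      (fun x hx => (Real.hasDerivAt_log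
        (hsq0.trans_le hx.1).ne').continuousAt.continuousWithinAt)
      (fun x hx => Real.hasDerivAt_log (hsq0.trans hx.1).ne')
    have hξ0 : 0 < ξ := hsq0.trans hξ.1
    have hM1 : |G r + Real.log r / (2 * π)| ≤ M := hη ⟨hr0, hrη⟩
    have hM2 : |G (r ^ 2) + Real.log (r ^ 2) / (2 * π)| ≤ M := hη ⟨hsq0, hsq.trans hrη⟩
    have hlogdiff : Real.log r - Real.log (r ^ 2) = -Real.log r := by
      rw [Real.log_pow]; push_cast; ring
    have hv : (ξ * deriv G ξ + 1 / (2 * π)) * (-Real.log r)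
        = (G r + Real.log r / (2 * π)) - (G (r ^ 2) + Real.log (r ^ 2) / (2 * π)) := by
      rw [← hlogdiff]
      calc (ξ * deriv G ξ + 1 / (2 * π)) * (Real.log r - Real.log (r ^ 2))
          = ξ * ((Real.log r - Real.log (r ^ 2)) * (deriv G ξ + ξ⁻¹ / (2 * π))) := by
            field_simp
        _ = _ := by rw [hcauchy, mul_left_comm, mul_inv_cancel₀ hξ0.ne', mul_one]
    have hvξ : |ξ * deriv G ξ + 1 / (2 * π)| ≤ 2 * M / (-Real.log r) := by
      rw [le_div_iff₀ (by linarith), ← abs_of_pos (neg_pos.2 hlog), ← abs_mul, hv]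
      exact (abs_sub _ _).trans (by linarith)
    have hL := hLip ξ ⟨hξ0, hξ.2.trans hrδ⟩ r ⟨hr0, hrδ⟩
    rw [abs_of_pos (sub_pos.2 hξ.2)] at hL
    rw [Real.dist_eq]
    calc |r * deriv G r - -(1 / (2 * π))|
        = |(r * deriv G r - ξ * deriv G ξ) + (ξ * deriv G ξ + 1 / (2 * π))| := by congr 1; ring
      _ ≤ _ := abs_add_le _ _
      _ ≤ r + 2 * M / (-Real.log r) := by linarith
  have hlim : Tendsto (fun r : ℝ => r + 2 * M / (-Real.log r)) (nhdsWithin 0 (Set.Ioi 0))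
      (nhds 0) := by
    have h : Tendsto (fun r : ℝ => -Real.log r) (nhdsWithin 0 (Set.Ioi 0)) atTop :=
      tendsto_neg_atBot_atTop.comp Real.tendsto_log_nhdsGT_zero
    simpa using hid.add (h.const_div_atTop (2 * M))
  rw [tendsto_iff_dist_tendsto_zero]
  exact squeeze_zero' (Eventually.of_forall fun _ => dist_nonneg) hbound hlim

lemma tendsto_pohozaevFun {G : ℝ → ℝ} (hG : ContDiffOn ℝ 2 G (Set.Ioo 0 1))
    (hODE : ∀ r ∈ Set.Ioo (0 : ℝ) 1,
      -(deriv (deriv G) r) - deriv G r / r = G r / (1 - r ^ 2) ^ 2)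
    (hb1 : ∃ M : ℝ, ∀ᶠ r in nhdsWithin 0 (Set.Ioi (0 : ℝ)),
      |G r + Real.log r / (2 * π)| ≤ M) :
    Tendsto (pohozaevFun G) (nhdsWithin 0 (Set.Ioi 0)) (nhds (1 / (4 * π))) := by
  have hid : Tendsto (fun r : ℝ => r) (nhdsWithin 0 (Set.Ioi 0)) (nhds 0) :=
    tendsto_nhdsWithin_of_tendsto_nhds tendsto_id
  have h1 := ((tendsto_flux hG hODE hb1).pow 2).const_mul π
  have ha : Tendsto (fun r : ℝ => 1 / (1 - r ^ 2) ^ 2) (nhdsWithin 0 (Set.Ioi 0)) (nhds 1) := by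
    have := (((hid.pow 2).const_sub 1).pow 2).inv₀ (by norm_num)
    simpa using this
  have h2 := (ha.const_mul π).mul ((tendsto_mul_self_of_log_bound hb1).pow 2)
  have h3 := h1.add h2
  have e : π * (-(1 / (2 * π))) ^ 2 + π * 1 * (0 : ℝ) ^ 2 = 1 / (4 * π) := by
    field_simp
    norm_num
  rw [e] at h3
  exact h3

/-- Integration in polar coordinates of a radial function over a disc. -/
lemma integral_ball_radial (f : ℝ → ℝ) {ρ : ℝ} :
    ∫ x in Metric.ball (0 : E2) ρ, f ‖x‖ = 2 * π * ∫ r in Set.Ioo 0 ρ, r * f r := by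
  have hvol : (volume : Measure E2).real (Metric.ball 0 1) = π := by
    simp [Measure.real, Real.pi_nonneg]
  have h := integral_fun_norm_addHaar (volume : Measure E2) ((Set.Iio ρ).indicator f)
  rw [hvol] at h
  rw [← integral_indicator Metric.isOpen_ball.measurableSet]
  have e1 : (Metric.ball (0 : E2) ρ).indicator (fun x => f ‖x‖)
      = fun x => (Set.Iio ρ).indicator f ‖x‖ := by
    ext x
    by_cases hx : ‖x‖ < ρ <;> simp [Set.indicator, hx]
  rw [e1, h]
  have e2 : Set.Ioo 0 ρ = Set.Ioi 0 ∩ Set.Iio ρ := rfl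
  rw [e2, ← setIntegral_indicator measurableSet_Iio]
  have e3 : ∀ y : ℝ, y ^ (Module.finrank ℝ E2 - 1) • (Set.Iio ρ).indicator f y
      = (Set.Iio ρ).indicator (fun r => r * f r) y := by
    intro y
    by_cases hy : y < ρ <;> simp [Set.indicator, hy]
  simp only [e3]
  simp [mul_assoc]

/-- Pohozaev-type identity for the radial Green's function of the Hardy operator.
If `G ∈ C²((0,1))` solves `−G'' − G'/r = G/(1−r²)²` on `(0,1)`, and
`G(r) + ln(r)/(2π)` and `r G'(r) + 1/(2π)` stay bounded as `r → 0⁺`, then for every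
`ρ ∈ (0,1)`,
`∫_{B_ρ} [a(|x|) + 2|x|²/(1−|x|²)³] G(|x|)² dx − πρ²G'(ρ)² − πa(ρ)ρ²G(ρ)² = −1/(4π)`,
where `a(r) = (1−r²)^{−2}`. -/
theorem pohozaev_identity_green (G : ℝ → ℝ)
    (hG : ContDiffOn ℝ 2 G (Set.Ioo 0 1))
    (hODE : ∀ r ∈ Set.Ioo (0 : ℝ) 1,
      -(deriv (deriv G) r) - deriv G r / r = G r / (1 - r ^ 2) ^ 2)
    (hb1 : ∃ M : ℝ, ∀ᶠ r in nhdsWithin 0 (Set.Ioi (0 : ℝ)),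
      |G r + Real.log r / (2 * π)| ≤ M)
    (hb2 : ∃ M : ℝ, ∀ᶠ r in nhdsWithin 0 (Set.Ioi (0 : ℝ)),
      |r * deriv G r + 1 / (2 * π)| ≤ M) :
    ∀ ρ ∈ Set.Ioo (0 : ℝ) 1,
      (∫ x in Metric.ball (0 : E2) ρ,
          (1 / (1 - ‖x‖ ^ 2) ^ 2 + 2 * ‖x‖ ^ 2 / (1 - ‖x‖ ^ 2) ^ 3) * (G ‖x‖) ^ 2)
        - π * ρ ^ 2 * (deriv G ρ) ^ 2
        - π * (1 / (1 - ρ ^ 2) ^ 2) * ρ ^ 2 * (G ρ) ^ 2 = -(1 / (4 * π)) := by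
  intro ρ hρ
  rw [integral_ball_radial
    (fun r => (1 / (1 - r ^ 2) ^ 2 + 2 * r ^ 2 / (1 - r ^ 2) ^ 3) * (G r) ^ 2),
    ← integral_const_mul, ← integral_Ioc_eq_integral_Ioo,
    ← intervalIntegral.integral_of_le hρ.1.le]
  -- The value of `pohozaevFun G` at `0` is `0`, not the limit `1 / (4π)`, hence the update.
  set F : ℝ → ℝ := Function.update (pohozaevFun G) 0 (1 / (4 * π)) with hF
  have hFeq : ∀ r, 0 < r → F r = pohozaevFun G r := fun r hr =>
    Function.update_of_ne hr.ne' _ _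
  have hderiv : ∀ r ∈ Set.Ioo (0 : ℝ) 1, HasDerivAt F
      (2 * π * (r * ((1 / (1 - r ^ 2) ^ 2 + 2 * r ^ 2 / (1 - r ^ 2) ^ 3) * (G r) ^ 2))) r := by
    intro r hr
    refine (hasDerivAt_pohozaevFun hG hODE hr).congr_of_eventuallyEq ?_
    filter_upwards [lt_mem_nhds hr.1] with s hs using hFeq s hs
  have hcont : ContinuousOn F (Set.Icc 0 ρ) := by
    intro r hr
    rcases hr.1.eq_or_lt with rfl | h0
    · rw [hF, continuousWithinAt_update_same]
      refine (tendsto_pohozaevFun hG hODE hb1).mono_left (nhdsWithin_mono _ ?_)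
      exact fun x hx => lt_of_le_of_ne hx.1.1 (Ne.symm hx.2)
    · exact (hderiv r ⟨h0, hr.2.trans_lt hρ.2⟩).continuousAt.continuousWithinAt
  have hsub : ∀ r ∈ Set.Ioo 0 ρ, r ∈ Set.Ioo (0 : ℝ) 1 := fun r hr => ⟨hr.1, hr.2.trans hρ.2⟩
  -- The derivative is nonnegative, so continuity of `F` up to `0` already gives integrability.
  have hint := intervalIntegral.integrableOn_deriv_of_nonneg hcont
    (fun r hr => hderiv r (hsub r hr)) (fun r hr => by
      have h1 : 0 < r := hr.1
      have h2 : 0 < 1 - r ^ 2 := by nlinarith [(hsub r hr).2]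
      positivity)
  rw [intervalIntegral.integral_eq_sub_of_hasDerivAt_of_le hρ.1.le hcont
    (fun r hr => hderiv r (hsub r hr))
    ((intervalIntegrable_iff_integrableOn_Ioc_of_le hρ.1.le).2 hint), hFeq ρ hρ.1,
    show F 0 = 1 / (4 * π) from Function.update_self _ _ _, pohozaevFun]
  ring
end
end

section
/- The function ξ : ℝ² → ℝ defined by ξ(x) = −(1/(4π)) ln(1 + π|x|²) satisfies −Δξ(x) = e^{8π ξ(x)} for all x ∈ ℝ², and ∫_{ℝ²} e^{8π ξ(x)} dx = 1. -/
/-!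
Writing `ρ = 1 + π|x|²`, the gradient of `ξ = -(1/(4π)) log ρ` is `-x / (2ρ)`, and the divergence
of this field in dimension two is `-1/ρ + π|x|²/ρ² = -1/ρ²`; since `e^{8πξ} = ρ⁻²`, this is the
equation. For the integral, polar coordinates reduce the claim to
`∫₀^∞ r (1 + πr²)⁻² dr = 1/(2π)`, for which `-(2π)⁻¹ (1 + πr²)⁻¹` is an antiderivative.
-/

open MeasureTheory Real

noncomputable section

/-- The Laplacian of `f : ℝ² → ℝ`, as the sum of the pure second partial derivatives. -/
def lap (f : E2 → ℝ) (x : E2) : ℝ :=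
  ∑ i : Fin 2,
    iteratedFDeriv ℝ 2 f x ![EuclideanSpace.single i 1, EuclideanSpace.single i 1]

lemma bubble_density_pos (t : ℝ) : 0 < 1 + π * t ^ 2 := by positivity

lemma exp_bubble (t : ℝ) :
    Real.exp (8 * π * (-(1 / (4 * π)) * Real.log (1 + π * t ^ 2))) = ((1 + π * t ^ 2) ^ 2)⁻¹ := by
  have h : 8 * π * (-(1 / (4 * π)) * Real.log (1 + π * t ^ 2))
      = -(Real.log ((1 + π * t ^ 2) ^ 2)) := by
    rw [Real.log_pow]
    field_simp
    push_cast
    ring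
  rw [h, Real.exp_neg, Real.exp_log (pow_pos (bubble_density_pos t) 2)]

lemma hasFDerivAt_bubble_density (x : E2) :
    HasFDerivAt (fun y : E2 => 1 + π * ‖y‖ ^ 2) (π • (2 : ℝ) • innerSL ℝ x) x := by
  have h := ((hasStrictFDerivAt_norm_sq x).hasFDerivAt.const_mul π).const_add 1
  rwa [← Nat.cast_smul_eq_nsmul ℝ, Nat.cast_ofNat] at h

/-- The gradient of the bubble is `-x / (2 (1 + π|x|²))`. -/
lemma fderiv_bubble :
    fderiv ℝ (fun y : E2 => -(1 / (4 * π)) * Real.log (1 + π * ‖y‖ ^ 2))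
      = fun x => (-(1 / 2) * (1 + π * ‖x‖ ^ 2)⁻¹) • innerSL ℝ x := by
  funext x
  have h := ((hasFDerivAt_bubble_density x).log
    (bubble_density_pos ‖x‖).ne').const_mul (-(1 / (4 * π)))
  rw [h.fderiv]
  ext v
  have := (bubble_density_pos ‖x‖).ne'
  simp only [_root_.smul_apply, smul_eq_mul]
  field_simp
  ring

lemma second_deriv_bubble (x v : E2) :
    iteratedFDeriv ℝ 2 (fun y : E2 => -(1 / (4 * π)) * Real.log (1 + π * ‖y‖ ^ 2)) x ![v, v]
      = -(1 / 2) * (1 + π * ‖x‖ ^ 2)⁻¹ * ‖v‖ ^ 2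
        + π * ((1 + π * ‖x‖ ^ 2) ^ 2)⁻¹ * (inner ℝ x v) ^ 2 := by
  rw [iteratedFDeriv_two_apply, fderiv_bubble]
  have h1 := ((hasDerivAt_inv (bubble_density_pos ‖x‖).ne').comp_hasFDerivAt x
    (hasFDerivAt_bubble_density x)).const_mul (-(1 / 2))
  have h2 : HasFDerivAt (fun y : E2 => innerSL ℝ y) (innerSL ℝ : E2 →L[ℝ] E2 →L[ℝ] ℝ) x :=
    (innerSL ℝ : E2 →L[ℝ] E2 →L[ℝ] ℝ).hasFDerivAt
  have h := h1.smul h2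
  have e : fderiv ℝ (fun x : E2 => (-(1 / 2) * (1 + π * ‖x‖ ^ 2)⁻¹) • innerSL ℝ x) x = _ :=
    h.fderiv
  rw [e]
  change (-(1 / 2) * (1 + π * ‖x‖ ^ 2)⁻¹) * inner ℝ v v
    + (-(1 / 2) * (-((1 + π * ‖x‖ ^ 2) ^ 2)⁻¹ * (π * (2 * inner ℝ x v)))) * inner ℝ x v = _
  rw [real_inner_self_eq_norm_sq]
  ring

lemma integral_radial :
    ∫ r in Set.Ioi (0 : ℝ), r * ((1 + π * r ^ 2) ^ 2)⁻¹ = (2 * π)⁻¹ := by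
  have hd : ∀ r ∈ Set.Ici (0 : ℝ), HasDerivAt (fun r : ℝ => -(2 * π)⁻¹ * (1 + π * r ^ 2)⁻¹)
      (r * ((1 + π * r ^ 2) ^ 2)⁻¹) r := by
    intro r _
    have h := ((((hasDerivAt_pow 2 r).const_mul π).const_add 1).inv
      (bubble_density_pos r).ne').const_mul (-(2 * π)⁻¹)
    refine h.congr_deriv ?_
    have := (bubble_density_pos r).ne'
    field_simp
    norm_num
  have ht : Filter.Tendsto (fun r : ℝ => -(2 * π)⁻¹ * (1 + π * r ^ 2)⁻¹) Filter.atTop (nhds 0) := by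
    have h : Filter.Tendsto (fun r : ℝ => 1 + π * r ^ 2) Filter.atTop Filter.atTop :=
      Filter.tendsto_atTop_add_const_left _ _
        ((Filter.tendsto_pow_atTop two_ne_zero).const_mul_atTop pi_pos)
    simpa using h.inv_tendsto_atTop.const_mul (-(2 * π)⁻¹)
  rw [integral_Ioi_of_hasDerivAt_of_nonneg' hd (fun r hr => ?_) ht]
  · simp
  · have : 0 < r := hr
    positivity

/-- The standard bubble `ξ(x) = −(1/(4π)) ln(1 + π|x|²)` (see (4.6)):
it satisfies `−Δξ = e^{8πξ}` on `ℝ²` and `∫_{ℝ²} e^{8πξ} dx = 1`. -/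
theorem bubble_solution :
    (∀ x : E2,
      -(lap (fun y : E2 => -(1 / (4 * π)) * Real.log (1 + π * ‖y‖ ^ 2)) x)
        = Real.exp (8 * π * (-(1 / (4 * π)) * Real.log (1 + π * ‖x‖ ^ 2)))) ∧
    (∫ x : E2, Real.exp (8 * π * (-(1 / (4 * π)) * Real.log (1 + π * ‖x‖ ^ 2)))) = 1 := by
  simp_rw [exp_bubble]
  constructor
  · intro x
    have hn : ‖x‖ ^ 2 = x 0 ^ 2 + x 1 ^ 2 := by
      simp [EuclideanSpace.norm_sq_eq, Fin.sum_univ_two]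
    have := (bubble_density_pos ‖x‖).ne'
    simp only [lap, Fin.sum_univ_two, second_deriv_bubble, PiLp.norm_single,
      EuclideanSpace.inner_single_right]
    simp only [norm_one, one_pow, one_mul, conj_trivial]
    field_simp
    linear_combination (2 * π) * hn
  · rw [integral_fun_norm_addHaar volume (fun r : ℝ => ((1 + π * r ^ 2) ^ 2)⁻¹)]
    have hv : (volume : Measure E2).real (Metric.ball 0 1) = π := by
      simp [Measure.real, EuclideanSpace.volume_ball_fin_two, pi_pos.le]
    simp only [finrank_euclideanSpace, Fintype.card_fin, hv, smul_eq_mul, nsmul_eq_mul,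
      Nat.add_one_sub_one, pow_one]
    rw [integral_radial]
    field_simp
    norm_num
end
end

section
/- For every integer n ≥ 2 and every u ∈ C_c^∞(Bⁿ), where Bⁿ is the open unit ball in ℝⁿ, one has ∫_{Bⁿ} |∇u|² dx ≥ ∫_{Bⁿ} u(x)²/(1−|x|²)² dx. -/
/-!
Write `r = |x|`. The positive function `φ = (1 - r²)^{1/2}` has logarithmic gradient `-F` with
`F = x / (1 - r²)`. Expanding `|∇u + u F|² ≥ 0` gives
`|∇u|² ≥ -div (u² F) + u² (div F - |F|²)`, and
`div F - |F|² = ((n - 1) (1 - r²) + 1) / (1 - r²)² ≥ 1 / (1 - r²)²` on the ball.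
The divergence term integrates to zero because `u² F = w x` with `w = u² / (1 - r²)` smooth and
compactly supported; this is `integral_fderiv_self_add`, i.e. `∫ (∂w(x)·x + n w) = 0`.
-/

open MeasureTheory Real

noncomputable section

/-- The divergence theorem for the field `w(x) x`, whose divergence is `∂w(x)·x + n w(x)`. -/
lemma integral_fderiv_self_add {n : ℕ} {w : EuclideanSpace ℝ (Fin n) → ℝ}
    (hw : ContDiff ℝ 1 w) (hc : HasCompactSupport w) :
    Integrable (fun x => fderiv ℝ w x x + n * w x) ∧
      ∫ x, (fderiv ℝ w x x + n * w x) = 0 := by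
  have hcont := hw.continuous
  have hf : Continuous (fderiv ℝ w) := hw.continuous_fderiv (by norm_num)
  have hwi : Integrable w := hcont.integrable_of_hasCompactSupport hc
  have hfc : HasCompactSupport (fderiv ℝ w) := hc.fderiv ℝ
  have hD (i : Fin n) : Integrable (fun x => x i * fderiv ℝ w x (EuclideanSpace.single i 1)) := by
    refine Continuous.integrable_of_hasCompactSupport (by fun_prop) ?_
    exact hfc.mono fun x hx h => hx (by simp [h])
  have hsum (x : EuclideanSpace ℝ (Fin n)) :
      fderiv ℝ w x x = ∑ i, x i * fderiv ℝ w x (EuclideanSpace.single i 1) := by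
    have h := congrArg (fderiv ℝ w x) ((EuclideanSpace.basisFun (Fin n) ℝ).sum_repr x)
    rw [map_sum] at h
    simpa using h.symm
  have hcoord (i : Fin n) (x : EuclideanSpace ℝ (Fin n)) :
      fderiv ℝ (fun x : EuclideanSpace ℝ (Fin n) => x i) x (EuclideanSpace.single i 1) = 1 := by
    have : HasFDerivAt (fun x : EuclideanSpace ℝ (Fin n) => x i)
        (EuclideanSpace.proj (𝕜 := ℝ) i) x :=
      (EuclideanSpace.proj (𝕜 := ℝ) i).hasFDerivAt
    rw [this.fderiv]
    simp
  have hparts (i : Fin n) :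
      ∫ x, x i * fderiv ℝ w x (EuclideanSpace.single i 1) = - ∫ x, w x := by
    rw [integral_mul_fderiv_eq_neg_fderiv_mul_of_integrable]
    · simp [hcoord]
    · simpa [hcoord] using hwi
    · exact hD i
    · refine Continuous.integrable_of_hasCompactSupport (by fun_prop) ?_
      exact hc.mono fun x hx h => hx (by simp [h])
    · fun_prop
    · exact fun x _ => hw.differentiable (by norm_num) x
  have hI : Integrable (fun x => fderiv ℝ w x x) := by
    simp_rw [hsum]
    exact integrable_finsetSum _ fun i _ => hD i
  refine ⟨hI.add (hwi.const_mul _), ?_⟩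
  rw [integral_add hI (hwi.const_mul _), integral_const_mul]
  simp_rw [hsum]
  rw [integral_finsetSum _ fun i _ => hD i]
  simp [hparts]

/-- The Hardy inequality on the unit ball `Bⁿ ⊆ ℝⁿ`, `n ≥ 2`:
`∫_{Bⁿ} |∇u|² ≥ ∫_{Bⁿ} u²/(1−|x|²)²` for every `u ∈ C_c^∞(Bⁿ)`. -/
theorem hardy_inequality_ball (n : ℕ) (hn : 2 ≤ n)
    (u : EuclideanSpace ℝ (Fin n) → ℝ)
    (hsmooth : ContDiff ℝ (⊤ : ℕ∞) u) (hcomp : HasCompactSupport u)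
    (hsupp : tsupport u ⊆ Metric.ball (0 : EuclideanSpace ℝ (Fin n)) 1) :
    (∫ x in Metric.ball (0 : EuclideanSpace ℝ (Fin n)) 1, ‖gradient u x‖ ^ 2) ≥
      ∫ x in Metric.ball (0 : EuclideanSpace ℝ (Fin n)) 1,
        (u x) ^ 2 / (1 - ‖x‖ ^ 2) ^ 2 := by
  have hu1 : ContDiff ℝ 1 u := hsmooth.of_le (by exact_mod_cast le_top)
  have hud : Differentiable ℝ u := hu1.differentiable (by norm_num)
  have hpos {x : EuclideanSpace ℝ (Fin n)} (hx : x ∈ Metric.ball 0 1) : 0 < 1 - ‖x‖ ^ 2 := by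
    have h : ‖x‖ < 1 := by simpa using hx
    nlinarith [norm_nonneg x]
  -- dividing `u²` by a power of `1 - r²` preserves smoothness: the quotient vanishes near the sphere
  have hsm (k : ℕ) : ContDiff ℝ 1 (fun x => u x ^ 2 / (1 - ‖x‖ ^ 2) ^ k) := by
    rw [← contMDiff_iff_contDiff]
    refine contMDiff_of_tsupport fun x hx => ?_
    rw [contMDiffAt_iff_contDiffAt]
    have hx' : x ∈ tsupport u := by
      refine closure_mono ?_ hx
      intro y hy h
      exact hy (by simp [h])
    have hne : (1 - ‖x‖ ^ 2) ^ k ≠ 0 := pow_ne_zero _ (hpos (hsupp hx')).ne'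
    exact (hu1.contDiffAt.pow 2).div
      ((contDiffAt_const.sub (contDiff_norm_sq ℝ).contDiffAt).pow k) hne
  have hcs (k : ℕ) : HasCompactSupport (fun x => u x ^ 2 / (1 - ‖x‖ ^ 2) ^ k) :=
    hcomp.mono fun x hx h => hx (by simp [h])
  obtain ⟨hIdiv, hdiv⟩ := integral_fderiv_self_add (hsm 1) (hcs 1)
  have hIq := (hsm 2).continuous.integrable_of_hasCompactSupport (μ := volume) (hcs 2)
  have hgrad (x) : ‖gradient u x‖ = ‖fderiv ℝ u x‖ := by
    simp [gradient]
  have hIg : Integrable (fun x => ‖gradient u x‖ ^ 2) := by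
    simp_rw [hgrad]
    have hf : Continuous (fderiv ℝ u) := hu1.continuous_fderiv (by norm_num)
    refine Continuous.integrable_of_hasCompactSupport (by fun_prop) ?_
    exact (hcomp.fderiv ℝ).mono fun x hx h => hx (by simp [h])
  have hu0 {x} (hx : x ∉ Metric.ball (0 : EuclideanSpace ℝ (Fin n)) 1) : u x = 0 :=
    image_eq_zero_of_notMem_tsupport fun h => hx (hsupp h)
  have hf0 {x} (hx : x ∉ Metric.ball (0 : EuclideanSpace ℝ (Fin n)) 1) : fderiv ℝ u x = 0 :=
    fderiv_of_notMem_tsupport ℝ fun h => hx (hsupp h)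
  have hw0 {x} (hx : x ∉ Metric.ball (0 : EuclideanSpace ℝ (Fin n)) 1) :
      fderiv ℝ (fun x => u x ^ 2 / (1 - ‖x‖ ^ 2) ^ 1) x = 0 := by
    refine fderiv_of_notMem_tsupport ℝ fun h => hx (hsupp ?_)
    refine closure_mono ?_ h
    intro y hy h
    exact hy (by simp [h])
  rw [ge_iff_le, setIntegral_eq_integral_of_forall_compl_eq_zero (fun x hx => by simp [hu0 hx]),
    setIntegral_eq_integral_of_forall_compl_eq_zero (fun x hx => by simp [hgrad, hf0 hx])]
  have key : ∀ x, u x ^ 2 / (1 - ‖x‖ ^ 2) ^ 2 -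
      (fderiv ℝ (fun x => u x ^ 2 / (1 - ‖x‖ ^ 2) ^ 1) x x + n * (u x ^ 2 / (1 - ‖x‖ ^ 2) ^ 1))
      ≤ ‖gradient u x‖ ^ 2 := by
    intro x
    by_cases hx : x ∈ Metric.ball (0 : EuclideanSpace ℝ (Fin n)) 1
    · have hp := hpos hx
      have hinner : fderiv ℝ u x x = inner ℝ (gradient u x) x := by
        simp [gradient]
      have hder : fderiv ℝ (fun x => u x ^ 2 / (1 - ‖x‖ ^ 2) ^ 1) x x =
          2 * u x * fderiv ℝ u x x / (1 - ‖x‖ ^ 2) +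
            u x ^ 2 * (2 * ‖x‖ ^ 2) / (1 - ‖x‖ ^ 2) ^ 2 := by
        have h1 := (hud x).hasFDerivAt.pow 2
        have h2 := (hasDerivAt_inv hp.ne').comp_hasFDerivAt x
          ((hasStrictFDerivAt_norm_sq x).hasFDerivAt.const_sub 1)
        have h3 := h1.mul h2
        have h4 : HasFDerivAt (fun x => u x ^ 2 / (1 - ‖x‖ ^ 2) ^ 1) _ x :=
          h3.congr_of_eventuallyEq (.of_forall fun y => by simp [div_eq_mul_inv])
        rw [h4.fderiv]
        simp
        field_simp
        ring
      -- the expanded square `|∇u + u x / (1 - r²)|²`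
      have hsq : 0 ≤ ‖gradient u x + (u x / (1 - ‖x‖ ^ 2)) • x‖ ^ 2 := sq_nonneg _
      rw [norm_add_sq_real, inner_smul_right, norm_smul, mul_pow, norm_eq_abs, sq_abs,
        ← hinner] at hsq
      rw [hder]
      have hn1 : (0 : ℝ) ≤ (n - 1) * (u x ^ 2 / (1 - ‖x‖ ^ 2)) := by
        have : (2 : ℝ) ≤ n := by exact_mod_cast hn
        exact mul_nonneg (by linarith) (by positivity)
      have hid : u x ^ 2 / (1 - ‖x‖ ^ 2) ^ 2 -
          (2 * u x * fderiv ℝ u x x / (1 - ‖x‖ ^ 2) +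
            u x ^ 2 * (2 * ‖x‖ ^ 2) / (1 - ‖x‖ ^ 2) ^ 2 + n * (u x ^ 2 / (1 - ‖x‖ ^ 2) ^ 1)) =
          -(2 * (u x / (1 - ‖x‖ ^ 2) * fderiv ℝ u x x) + (u x / (1 - ‖x‖ ^ 2)) ^ 2 * ‖x‖ ^ 2)
            - (n - 1) * (u x ^ 2 / (1 - ‖x‖ ^ 2)) := by
        field_simp
        ring
      rw [hid]
      linarith
    · rw [hw0 hx]
      simp [hu0 hx]
  have := integral_mono (hIq.sub hIdiv) hIg key
  simp only [Pi.sub_apply] at this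
  rwa [integral_sub hIq hIdiv, hdiv, sub_zero] at this
end
end

section
/- For every λ > 1, the infimum over u ∈ C_c^∞(B) of ∫_B |∇u|² dx − λ ∫_B u(x)²/(1−|x|²)² dx equals −∞; that is, for every M > 0 there exists u ∈ C_c^∞(B) with ∫_B |∇u|² dx − λ ∫_B u(x)²/(1−|x|²)² dx < −M. -/
/-!
Radial test functions `u(x) = √s · φ(log s)` with `s = 1 - |x|²` reduce the problem to one real
variable. With `t = log s`, polar coordinates give, up to the common factor `vol B`,
`∫_B u²/(1-|x|²)² = ∫ φ²` and `∫_B |∇u|² = ∫ (1 - eᵗ) (φ + 2φ')² ≤ ∫ (φ + 2φ')²`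
(`integral_ball_radial`, `norm_gradient_hardyTest_sq`). For a fixed bump `ψ` supported in
`t ∈ [-2, -1]` and `φ(t) = ψ(t/n)`, the difference of the two integrals, the second multiplied by
`λ`, is at most `n (1-λ) ∫ ψ² + 4 ∫ ψψ' + (4/n) ∫ ψ'²`, which tends to `-∞` as `n → ∞`.
-/

open MeasureTheory Real Filter

noncomputable section

/-- The open unit disc in `ℝ²`. -/
def B2 : Set E2 := Metric.ball 0 1

/-- `u ∈ C_c^∞(B)`: a smooth function with compact support contained in the open unit disc. -/
def IsTest (u : E2 → ℝ) : Prop :=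
  ContDiff ℝ (⊤ : ℕ∞) u ∧ HasCompactSupport u ∧ tsupport u ⊆ B2

/-- The Hardy functional `H(u) = ∫_B |∇u|² − ∫_B u²/(1−|x|²)²`. -/
def H (u : E2 → ℝ) : ℝ :=
  (∫ x in B2, ‖gradient u x‖ ^ 2) - ∫ x in B2, (u x) ^ 2 / (1 - ‖x‖ ^ 2) ^ 2


/-- Polar coordinates on the disc followed by the substitution `r = √(1 - eᵗ)`. No integrability
is needed, since all the changes of variables used are valid for arbitrary functions. -/
lemma integral_ball_radial_s17 (F : ℝ → ℝ) :
    ∫ x in B2, F ‖x‖ =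
      volume.real B2 * ∫ t in Set.Iio (0 : ℝ), exp t * F (√(1 - exp t)) := by
  have h1 : ∫ x in B2, F ‖x‖ = ∫ x : E2, (Set.Iio (1 : ℝ)).indicator F ‖x‖ := by
    rw [← integral_indicator (by exact measurableSet_ball)]
    congr 1
    ext x
    by_cases hx : ‖x‖ < 1 <;> simp [B2, Set.indicator, hx]
  have himg : (fun t : ℝ => √(1 - exp t)) '' Set.Iio 0 = Set.Ioo 0 1 := by
    ext r
    constructor
    · rintro ⟨t, ht, rfl⟩
      have h1 : exp t < 1 := Real.exp_lt_one_iff.2 ht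
      have h0 := exp_pos t
      refine ⟨Real.sqrt_pos.2 (by linarith), ?_⟩
      rw [Real.sqrt_lt' one_pos]
      linarith
    · rintro ⟨h0, h1⟩
      have hp : 0 < 1 - r ^ 2 := by nlinarith
      refine ⟨log (1 - r ^ 2), Real.log_neg hp (by nlinarith), ?_⟩
      simp only [exp_log hp, sub_sub_cancel, Real.sqrt_sq h0.le]
  have hder : ∀ t ∈ Set.Iio (0 : ℝ), HasDerivWithinAt (fun t : ℝ => √(1 - exp t))
      (-exp t / (2 * √(1 - exp t))) (Set.Iio 0) t := by
    intro t ht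
    have h1 : exp t < 1 := Real.exp_lt_one_iff.2 ht
    exact (((Real.hasDerivAt_exp t).const_sub 1).sqrt (by linarith)).hasDerivWithinAt
  have hinj : Set.InjOn (fun t : ℝ => √(1 - exp t)) (Set.Iio 0) := by
    intro a ha b hb hab
    have h1 : exp a < 1 := Real.exp_lt_one_iff.2 ha
    have h2 : exp b < 1 := Real.exp_lt_one_iff.2 hb
    have := (Real.sqrt_inj (by linarith) (by linarith)).1 hab
    exact Real.exp_injective (by linarith)
  have h2 : ∫ y in Set.Ioi (0 : ℝ), y ^ (Module.finrank ℝ E2 - 1) • (Set.Iio (1 : ℝ)).indicator F y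
      = ∫ y in Set.Ioo (0 : ℝ) 1, y * F y := by
    rw [← Set.Ioi_inter_Iio, ← setIntegral_indicator measurableSet_Iio]
    congr 1
    ext y
    by_cases hy : y < 1 <;> simp [Set.indicator, hy]
  rw [h1, integral_fun_norm_addHaar volume, h2, ← himg,
    integral_image_eq_integral_abs_deriv_smul measurableSet_Iio hder hinj]
  have h3 : ∫ t in Set.Iio (0 : ℝ), |-exp t / (2 * √(1 - exp t))| •
      (√(1 - exp t) * F (√(1 - exp t)))
      = ∫ t in Set.Iio (0 : ℝ), (1 / 2) * (exp t * F (√(1 - exp t))) := by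
    refine setIntegral_congr_fun measurableSet_Iio fun t ht => ?_
    have h1 : exp t < 1 := Real.exp_lt_one_iff.2 ht
    have h0 : 0 < √(1 - exp t) := Real.sqrt_pos.2 (by linarith)
    simp only [smul_eq_mul]
    rw [neg_div, abs_neg, abs_of_pos (by positivity)]
    field_simp
  rw [h3, integral_const_mul]
  simp [B2]
  ring

/-- The profile `s ↦ √s · φ(log s)`; for `s ≤ 0` it vanishes because `Real.sqrt` does. -/
def hardyProfile (φ : ℝ → ℝ) (s : ℝ) : ℝ := √s * φ (log s)

/-- The radial test function `x ↦ √s · φ(log s)`, `s = 1 - |x|²`. -/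
def hardyTest (φ : ℝ → ℝ) (x : E2) : ℝ := hardyProfile φ (1 - ‖x‖ ^ 2)

lemma hardyProfile_eq_zero {φ : ℝ → ℝ} {b : ℝ} (hb : ∀ t ≤ b, φ t = 0) {s : ℝ}
    (hs : s < exp b) : hardyProfile φ s = 0 := by
  rcases le_or_gt s 0 with h | h
  · simp [hardyProfile, Real.sqrt_eq_zero_of_nonpos h]
  · rw [hardyProfile, hb _ ((Real.log_le_iff_le_exp h).2 hs.le), mul_zero]

lemma contDiff_hardyProfile {φ : ℝ → ℝ} (hφ : ContDiff ℝ (⊤ : ℕ∞) φ) {b : ℝ}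
    (hb : ∀ t ≤ b, φ t = 0) : ContDiff ℝ (⊤ : ℕ∞) (hardyProfile φ) := by
  rw [contDiff_iff_contDiffAt]
  intro s
  rcases lt_or_ge s (exp b) with h | h
  · have : hardyProfile φ =ᶠ[nhds s] fun _ => 0 := by
      filter_upwards [Iio_mem_nhds h] with y hy using hardyProfile_eq_zero hb hy
    exact contDiffAt_const.congr_of_eventuallyEq this
  · have hs : s ≠ 0 := ((exp_pos b).trans_le h).ne'
    exact (Real.contDiffAt_sqrt hs).mul (hφ.contDiffAt.comp s (Real.contDiffAt_log.2 hs))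

lemma isTest_hardyTest {φ : ℝ → ℝ} (hφ : ContDiff ℝ (⊤ : ℕ∞) φ) {b : ℝ}
    (hb : ∀ t ≤ b, φ t = 0) : IsTest (hardyTest φ) := by
  have hsub : tsupport (hardyTest φ) ⊆ {x : E2 | exp b ≤ 1 - ‖x‖ ^ 2} := by
    refine closure_minimal (fun x hx => ?_) (isClosed_le (by fun_prop) (by fun_prop))
    by_contra h
    exact hx (hardyProfile_eq_zero hb (not_le.1 h))
  have hB : tsupport (hardyTest φ) ⊆ B2 := by
    intro x hx
    have h1 : exp b ≤ 1 - ‖x‖ ^ 2 := hsub hx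
    have h2 := exp_pos b
    rw [B2, mem_ball_zero_iff]
    nlinarith [norm_nonneg x]
  refine ⟨(contDiff_hardyProfile hφ hb).comp (contDiff_const.sub (contDiff_norm_sq ℝ)), ?_, hB⟩
  exact (isCompact_closedBall (0 : E2) 1).of_isClosed_subset (isClosed_tsupport _)
    (hB.trans Metric.ball_subset_closedBall)

lemma norm_gradient_hardyTest_sq {φ : ℝ → ℝ} (hφ : ContDiff ℝ (⊤ : ℕ∞) φ) {b : ℝ}
    (hb : ∀ t ≤ b, φ t = 0) (x : E2) :
    ‖gradient (hardyTest φ) x‖ ^ 2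
      = 4 * ‖x‖ ^ 2 * (deriv (hardyProfile φ) (1 - ‖x‖ ^ 2)) ^ 2 := by
  have hd : HasDerivAt (hardyProfile φ) (deriv (hardyProfile φ) (1 - ‖x‖ ^ 2)) (1 - ‖x‖ ^ 2) :=
    ((contDiff_hardyProfile hφ hb).differentiable (by simp) _).hasDerivAt
  have hn : HasFDerivAt (fun x : E2 => 1 - ‖x‖ ^ 2) (-(2 • innerSL ℝ x)) x :=
    (hasStrictFDerivAt_norm_sq x).hasFDerivAt.const_sub 1
  have hc : HasFDerivAt (hardyTest φ) _ x := hd.comp_hasFDerivAt x hn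
  rw [gradient, LinearIsometryEquiv.norm_map, hc.fderiv, norm_smul, norm_neg, two_nsmul,
    ← two_smul ℝ, norm_smul, innerSL_apply_norm, mul_pow, mul_pow, Real.norm_eq_abs, sq_abs]
  norm_num
  ring

lemma deriv_hardyProfile_exp {φ : ℝ → ℝ} (hφ : Differentiable ℝ φ) (t : ℝ) :
    exp t * (4 * (deriv (hardyProfile φ) (exp t)) ^ 2) = (φ t + 2 * deriv φ t) ^ 2 := by
  have h0 := exp_pos t
  have hs : 0 < √(exp t) := Real.sqrt_pos.2 h0
  have h1 : HasDerivAt φ (deriv φ t) (log (exp t)) := by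
    rw [log_exp]; exact (hφ t).hasDerivAt
  have h : HasDerivAt (hardyProfile φ) _ (exp t) :=
    (Real.hasDerivAt_sqrt h0.ne').mul (h1.comp (exp t) (Real.hasDerivAt_log h0.ne'))
  rw [h.deriv]
  simp only [log_exp]
  have hq : exp t = √(exp t) ^ 2 := (Real.sq_sqrt h0.le).symm
  generalize √(exp t) = q at *
  rw [hq]
  field_simp
  ring

/-- The one-dimensional upper bound for the Hardy functional on radial test functions. -/
lemma hardyTest_functional_le {φ : ℝ → ℝ} (hφ : ContDiff ℝ (⊤ : ℕ∞) φ) {b : ℝ}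
    (hb : ∀ t ≤ b, φ t = 0) (h0 : ∀ t, 0 ≤ t → φ t = 0) (hc : HasCompactSupport φ) (lam : ℝ) :
    (∫ x in B2, ‖gradient (hardyTest φ) x‖ ^ 2)
      - lam * (∫ x in B2, (hardyTest φ x) ^ 2 / (1 - ‖x‖ ^ 2) ^ 2)
      ≤ volume.real B2 * ((∫ t, (φ t + 2 * deriv φ t) ^ 2) - lam * ∫ t, φ t ^ 2) := by
  have hcont : Continuous fun t => (φ t + 2 * deriv φ t) ^ 2 := by
    have h1 := hφ.continuous
    have h2 := hφ.continuous_deriv (by simp)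
    fun_prop
  have hcs : HasCompactSupport fun t => (φ t + 2 * deriv φ t) ^ 2 := by
    have : HasCompactSupport fun t => φ t + 2 * deriv φ t := hc.add (hc.deriv.mul_left)
    exact this.comp_left (g := fun y : ℝ => y ^ 2) (by simp)
  have hint : Integrable fun t => (φ t + 2 * deriv φ t) ^ 2 :=
    hcont.integrable_of_hasCompactSupport hcs
  have e1 : ∫ x in B2, ‖gradient (hardyTest φ) x‖ ^ 2
      = volume.real B2 * ∫ t in Set.Iio (0 : ℝ), (1 - exp t) * (φ t + 2 * deriv φ t) ^ 2 := by
    simp_rw [norm_gradient_hardyTest_sq hφ hb]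
    rw [integral_ball_radial_s17 fun r => 4 * r ^ 2 * (deriv (hardyProfile φ) (1 - r ^ 2)) ^ 2]
    congr 1
    refine setIntegral_congr_fun measurableSet_Iio fun t ht => ?_
    have h1 : exp t < 1 := Real.exp_lt_one_iff.2 ht
    rw [Real.sq_sqrt (by linarith), sub_sub_cancel,
      ← deriv_hardyProfile_exp (hφ.differentiable (by simp))]
    ring
  have e2 : ∫ x in B2, (hardyTest φ x) ^ 2 / (1 - ‖x‖ ^ 2) ^ 2
      = volume.real B2 * ∫ t, φ t ^ 2 := by
    simp only [hardyTest]
    rw [integral_ball_radial_s17 fun r => (hardyProfile φ (1 - r ^ 2)) ^ 2 / (1 - r ^ 2) ^ 2,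
      ← setIntegral_eq_integral_of_forall_compl_eq_zero (s := Set.Iio (0 : ℝ))
        (f := fun t => φ t ^ 2) (fun t ht => by simp [h0 t (not_lt.1 ht)])]
    congr 1
    refine setIntegral_congr_fun measurableSet_Iio fun t ht => ?_
    have h1 : exp t < 1 := Real.exp_lt_one_iff.2 ht
    have h2 := exp_pos t
    rw [Real.sq_sqrt (by linarith), sub_sub_cancel, hardyProfile, log_exp, mul_pow,
      Real.sq_sqrt h2.le]
    field_simp
  have e3 : ∫ t in Set.Iio (0 : ℝ), (1 - exp t) * (φ t + 2 * deriv φ t) ^ 2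
      ≤ ∫ t, (φ t + 2 * deriv φ t) ^ 2 := by
    refine le_trans ?_ (setIntegral_le_integral (s := Set.Iio (0 : ℝ)) hint
      (Eventually.of_forall fun t => sq_nonneg _))
    refine setIntegral_mono_on ?_ hint.integrableOn measurableSet_Iio fun t ht => ?_
    · have : Continuous fun t => (1 - exp t) * (φ t + 2 * deriv φ t) ^ 2 :=
        (continuous_const.sub continuous_exp).mul hcont
      exact (this.integrable_of_hasCompactSupport hcs.mul_left).integrableOn
    · nlinarith [exp_pos t, sq_nonneg (φ t + 2 * deriv φ t)]
  rw [e1, e2]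
  nlinarith [mul_le_mul_of_nonneg_left e3 (measureReal_nonneg (μ := volume) (s := B2))]

/-- A bump in the logarithmic variable, supported in `[-2, -1]`. -/
lemma exists_log_bump : ∃ ψ : ℝ → ℝ, ContDiff ℝ (⊤ : ℕ∞) ψ ∧ HasCompactSupport ψ ∧
    (∀ t ≤ -2, ψ t = 0) ∧ (∀ t, -1 ≤ t → ψ t = 0) ∧ 0 < ∫ t, ψ t ^ 2 := by
  let f : ContDiffBump (-3 / 2 : ℝ) := ⟨1 / 4, 1 / 2, by norm_num, by norm_num⟩
  have hz : ∀ t, 1 / 2 ≤ |t - (-3 / 2)| → f t = 0 := fun t ht => f.zero_of_le_dist ht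
  refine ⟨f, f.contDiff, f.hasCompactSupport, fun t ht => hz t ?_, fun t ht => hz t ?_, ?_⟩
  · rw [le_abs]; right; linarith
  · rw [le_abs]; left; linarith
  · refine (f.continuous.pow 2).integral_pos_of_hasCompactSupport_nonneg_nonzero
      (f.hasCompactSupport.comp_left (g := fun y : ℝ => y ^ 2) (by simp))
      (fun t => sq_nonneg _) (x := -3 / 2) ?_
    have : f (-3 / 2) = 1 := f.one_of_mem_closedBall (by simp [f.rIn_pos.le])
    simp [this]

/-- The bound for the Dirichlet energy after dilating `ψ` by `n`: only the leading term `n ∫ ψ²`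
grows with `n`. -/
lemma integral_rescaled {ψ : ℝ → ℝ} (hψ : ContDiff ℝ (⊤ : ℕ∞) ψ) (hcs : HasCompactSupport ψ)
    {n : ℝ} (hn0 : 0 < n) :
    ∫ t, (ψ (t / n) + 2 * deriv (fun t => ψ (t / n)) t) ^ 2
      = n * (∫ t, ψ t ^ 2) + 4 * (∫ t, ψ t * deriv ψ t) + 4 / n * ∫ t, deriv ψ t ^ 2 := by
  have hψc := hψ.continuous
  have hψ'c : Continuous (deriv ψ) := hψ.continuous_deriv (by simp)
  have cA : HasCompactSupport fun t => ψ t ^ 2 :=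
    hcs.comp_left (g := fun y : ℝ => y ^ 2) (by simp)
  have cD : HasCompactSupport fun t => deriv ψ t ^ 2 :=
    hcs.deriv.comp_left (g := fun y : ℝ => y ^ 2) (by simp)
  have iA : Integrable fun t => ψ t ^ 2 := (hψc.pow 2).integrable_of_hasCompactSupport cA
  have iK : Integrable fun t => ψ t * deriv ψ t :=
    (hψc.mul hψ'c).integrable_of_hasCompactSupport hcs.mul_right
  have iD : Integrable fun t => deriv ψ t ^ 2 := (hψ'c.pow 2).integrable_of_hasCompactSupport cD
  have hder : ∀ t, deriv (fun t => ψ (t / n)) t = deriv ψ (t / n) / n := fun t => by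
    have h := ((hψ.differentiable (by simp)) (t / n)).hasDerivAt.comp t
      ((hasDerivAt_id t).div_const n)
    rw [show (fun t => ψ (t / n)) = ψ ∘ fun x => id x / n from rfl, h.deriv]
    ring
  simp_rw [hder]
  rw [Measure.integral_comp_div (fun y => (ψ y + 2 * (deriv ψ y / n)) ^ 2) n,
    abs_of_pos hn0, smul_eq_mul]
  have : ∀ y, (ψ y + 2 * (deriv ψ y / n)) ^ 2
      = ψ y ^ 2 + 4 / n * (ψ y * deriv ψ y) + 4 / n ^ 2 * deriv ψ y ^ 2 := fun y => by
    field_simp; ring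
  simp_rw [this]
  have iAK : Integrable fun t => ψ t ^ 2 + 4 / n * (ψ t * deriv ψ t) := iA.add (iK.const_mul _)
  rw [integral_add iAK (iD.const_mul _),
    integral_add iA (iK.const_mul _), integral_const_mul, integral_const_mul]
  field_simp

/-- Optimality of the constant in the Hardy inequality on the disc: for every `λ > 1`,
`inf{∫_B |∇u|² − λ∫_B u²/(1−|x|²)² : u ∈ C_c^∞(B)} = −∞`; i.e. for every `M > 0` there is
`u ∈ C_c^∞(B)` with `∫_B |∇u|² − λ∫_B u²/(1−|x|²)² < −M`. -/
theorem hardy_optimal :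
    ∀ lam : ℝ, 1 < lam → ∀ M : ℝ, 0 < M →
      ∃ u : E2 → ℝ, IsTest u ∧
        (∫ x in B2, ‖gradient u x‖ ^ 2)
          - lam * (∫ x in B2, (u x) ^ 2 / (1 - ‖x‖ ^ 2) ^ 2) < -M := by
  intro lam hlam M hM
  obtain ⟨ψ, hψ, hcs, hlo, hhi, hpos⟩ := exists_log_bump
  set A := ∫ t, ψ t ^ 2 with hA
  set K := ∫ t, ψ t * deriv ψ t with hK
  set D := ∫ t, deriv ψ t ^ 2 with hD
  have hD0 : 0 ≤ D := integral_nonneg fun t => sq_nonneg _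
  have hV : 0 < volume.real B2 := by
    rw [B2, measureReal_def]
    exact ENNReal.toReal_pos (Metric.measure_ball_pos volume _ one_pos).ne' measure_ball_lt_top.ne
  set V := volume.real B2
  -- `n ≥ 1` is so large that `n (λ-1) A` exceeds `4K + 4D + M/V`.
  obtain ⟨n, hn⟩ := exists_gt (max 1 ((4 * K + 4 * D + M / V) / ((lam - 1) * A)))
  have hn1 : 1 < n := (le_max_left _ _).trans_lt hn
  have hn0 : 0 < n := by linarith
  have hn2 : 4 * K + 4 * D + M / V < n * ((lam - 1) * A) :=
    (div_lt_iff₀ (mul_pos (by linarith) hpos)).1 ((le_max_right _ _).trans_lt hn)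
  have hφ : ContDiff ℝ (⊤ : ℕ∞) fun t => ψ (t / n) := hψ.comp (contDiff_id.div_const n)
  have hb : ∀ t ≤ -2 * n, ψ (t / n) = 0 := fun t ht => hlo _ ((div_le_iff₀ hn0).2 ht)
  have h0 : ∀ t, 0 ≤ t → ψ (t / n) = 0 := fun t ht =>
    hhi _ (by have := div_nonneg ht hn0.le; linarith)
  have hc : HasCompactSupport fun t => ψ (t / n) := by
    refine HasCompactSupport.intro (isCompact_Icc (a := -2 * n) (b := 0)) fun t ht => ?_
    by_contra h
    refine ht ⟨?_, ?_⟩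
    · by_contra h'; exact h (hb t (not_le.1 h').le)
    · by_contra h'; exact h (h0 t (not_le.1 h').le)
  refine ⟨_, isTest_hardyTest hφ hb, (hardyTest_functional_le hφ hb h0 hc lam).trans_lt ?_⟩
  have e1 := integral_rescaled hψ hcs hn0
  have e2 : ∫ t, ψ (t / n) ^ 2 = n * A := by
    rw [Measure.integral_comp_div (fun y => ψ y ^ 2) n, abs_of_pos hn0, smul_eq_mul]
  rw [e1, e2]
  have h4 : 4 / n * D ≤ 4 * D := by
    refine mul_le_mul_of_nonneg_right ?_ hD0
    rw [div_le_iff₀ hn0]; linarith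
  have h5 : n * A + 4 * K + 4 / n * D - lam * (n * A) < -(M / V) := by linarith
  calc V * (n * A + 4 * K + 4 / n * D - lam * (n * A)) < V * -(M / V) :=
        mul_lt_mul_of_pos_left h5 hV
    _ = -M := by field_simp
end
end
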